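/- arXiv:2007.10530 — 2 statements merged into one kernel-verified Lean document; each statement's English description precedes it below -/
import Mathlib

section
/- Let q = p^f be a prime power, n even, and G = Sp_n(q). Let g ∈ G be semisimple with s = supp(g) satisfying 1 ≤ s < n/2. Then the p-part of the order of the centralizer of g in G satisfies |C_G(g)|_p ≤ q^{((n−s)² + s²)/4}. -/
/-!
Let `V` be the natural module with `dim V = n` and let `W` be the eigenspace of `g` of largest
dimension `n - s > n / 2`. Its eigenvalue `e` satisfies `e ^ 2 = 1`, since otherwise `W` would be
totally isotropic; in particular `e` lies in `F`, and the dimension does not change when `F` is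
extended. As `g` is semisimple, `V = W ⊕ range (g - e)`, and the second summand is `W^⊥`, so `W`
is nondegenerate and the centralizer of `g` acts by isometries on each of `W` and `W^⊥`.

It remains to bound a `p`-group `P` of isometries of a nondegenerate alternating space of dimension
`d` by `q ^ (d ^ 2 / 4)`. Such a `P` fixes some `v ≠ 0`; choose `w` with `B v w = 1`. The orbit of
`w` lies in `w + v^⊥`, so it has at most `q ^ (d - 1)` points, and the stabilizer of `w` in `P` acts
faithfully on `⟨v, w⟩^⊥`. Induction on `d` concludes, because `(d - 2) ^ 2 + 4 (d - 1) = d ^ 2`.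
-/

namespace McKayGraphs

/-- The support of a matrix `g`: `supp(g) = dim V − max_{x ∈ 𝔽̄_q^×} dim ker(g − x·I)`,
the codimension of the largest eigenspace of `g` over the algebraic closure. -/
noncomputable def matSupp {F : Type*} [Field F] {ι : Type*} [Fintype ι]
    (g : Matrix ι ι F) : ℕ :=
  Fintype.card ι -
    ⨆ x : (AlgebraicClosure F)ˣ,
      Module.finrank (AlgebraicClosure F)
        (LinearMap.ker
          ((g.map (algebraMap F (AlgebraicClosure F))).mulVecLin
            - (x : AlgebraicClosure F) • LinearMap.id))

open Module

section PGroup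

variable {F V G : Type*} [Field F] [AddCommGroup V] [Module F V] [Group G] [DistribMulAction G V]
  {H : Subgroup G} {B : LinearMap.BilinForm F V} {W : Submodule F V} {v w : V}

theorem exists_ne_zero_forall_smul_eq_of_isPGroup [Finite F] [Module.Finite F V]
    {p : ℕ} [Fact p.Prime] [CharP F p] (hH : IsPGroup p H) (hW : W ≠ ⊥)
    (hHW : ∀ h ∈ H, ∀ u ∈ W, h • u ∈ W) : ∃ v ∈ W, v ≠ 0 ∧ ∀ h ∈ H, h • v = v := by
  let X : SubMulAction H V := ⟨W, fun h u hu ↦ hHW h h.2 u hu⟩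
  have : Finite V := Module.finite_of_finite F
  have : Nontrivial W := Submodule.nontrivial_iff_ne_bot.2 hW
  have hp : p ∣ Nat.card X := by
    have hF : p ∣ Nat.card F := by
      have := Fintype.ofFinite F
      rw [Nat.card_eq_fintype_card, ← CharP.cast_eq_zero_iff F, Nat.cast_card_eq_zero]
    change p ∣ Nat.card W
    rw [Module.natCard_eq_pow_finrank (K := F)]
    exact dvd_pow hF finrank_pos.ne'
  obtain ⟨v, hv, hv0⟩ := hH.exists_fixed_point_of_prime_dvd_card_of_fixed_point X hp
    (a := ⟨0, W.zero_mem⟩) fun h ↦ Subtype.ext (smul_zero h)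
  exact ⟨v, v.2, fun h ↦ hv0 (Subtype.ext h.symm), fun h hh ↦ congrArg Subtype.val (hv ⟨h, hh⟩)⟩

theorem relIndex_stabilizer_le_card {U : AddSubgroup V} [Finite U]
    (hU : ∀ h ∈ H, h • w - w ∈ U) : (MulAction.stabilizer G w).relIndex H ≤ Nat.card U := by
  have hsub : MulAction.orbit H w ⊆ (· + w) '' (U : Set V) := by
    rintro _ ⟨h, rfl⟩
    exact ⟨_, hU h h.2, sub_add_cancel _ _⟩
  calc (MulAction.stabilizer G w).relIndex H
      = (MulAction.orbit H w).ncard := MulAction.index_stabilizer H w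
    _ ≤ ((· + w) '' (U : Set V)).ncard := Set.ncard_le_ncard hsub (Set.toFinite _)
    _ = Nat.card U := Set.ncard_image_of_injective _ (add_left_injective w)

theorem exists_apply_eq_one_of_disjoint_orthogonal (hB : B.IsRefl)
    (hW : Disjoint W (B.orthogonal W)) (hv : v ∈ W) (hv0 : v ≠ 0) : ∃ w ∈ W, B v w = 1 := by
  obtain ⟨u, hu, hvu⟩ : ∃ u ∈ W, B v u ≠ 0 := by
    by_contra! h
    exact hv0 (Submodule.disjoint_def.1 hW v hv fun u hu ↦ hB _ _ (h u hu))
  exact ⟨(B v u)⁻¹ • u, W.smul_mem _ hu, by simp [hvu]⟩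

theorem sub_mem_inf_ker_inf_ker (hB : B.IsAlt) (hv : v ∈ W) (hw : w ∈ W) (hvw : B v w = 1)
    {u : V} (hu : u ∈ W) : u - (B v u • w - B w u • v) ∈ W ⊓ (B v).ker ⊓ (B w).ker := by
  have hwv : B w v = -1 := by rw [← hB.neg_eq, hvw]
  refine ⟨⟨W.sub_mem hu (W.sub_mem (W.smul_mem _ hw) (W.smul_mem _ hv)), ?_⟩, ?_⟩ <;>
    simp [hB.self_eq_zero, hvw, hwv]

theorem disjoint_orthogonal_inf_ker_inf_ker (hB : B.IsAlt) (hW : Disjoint W (B.orthogonal W))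
    (hv : v ∈ W) (hw : w ∈ W) (hvw : B v w = 1) :
    Disjoint (W ⊓ (B v).ker ⊓ (B w).ker) (B.orthogonal (W ⊓ (B v).ker ⊓ (B w).ker)) := by
  refine Submodule.disjoint_def.2 fun x ⟨⟨hx, hvx⟩, hwx⟩ hx' ↦
    Submodule.disjoint_def.1 hW x hx fun u hu ↦ ?_
  simpa [LinearMap.mem_ker.1 hvx, LinearMap.mem_ker.1 hwx] using
    hx' _ (sub_mem_inf_ker_inf_ker hB hv hw hvw hu)

theorem finrank_inf_ker_lt [Module.Finite F V] (hw : w ∈ W) (hvw : B v w ≠ 0) :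
    finrank F (W ⊓ (B v).ker : Submodule F V) < finrank F W :=
  Submodule.finrank_lt_finrank_of_lt (inf_lt_left.2 fun h ↦ hvw (h hw))

theorem finrank_inf_ker_inf_ker_add_two_le [Module.Finite F V] (hB : B.IsAlt)
    (hv : v ∈ W) (hw : w ∈ W) (hvw : B v w ≠ 0) :
    finrank F (W ⊓ (B v).ker ⊓ (B w).ker : Submodule F V) + 2 ≤ finrank F W := by
  have hwv : B w v ≠ 0 := by rwa [← hB.neg_eq, neg_ne_zero]
  have h₁ := finrank_inf_ker_lt hw hvw
  have h₂ := finrank_inf_ker_lt (W := W ⊓ (B v).ker) ⟨hv, hB v⟩ hwv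
  omega

theorem smul_mem_orthogonal {g : G} (hB : ∀ x y, B (g • x) (g • y) = B x y)
    (hgW : ∀ u ∈ W, g⁻¹ • u ∈ W) : ∀ u ∈ B.orthogonal W, g • u ∈ B.orthogonal W := by
  intro u hu n hn
  have : B (g⁻¹ • n) u = 0 := hu _ (hgW n hn)
  rwa [← hB, smul_inv_smul] at this

theorem smul_mem_inf_ker {g : G} (hB : ∀ x y, B (g • x) (g • y) = B x y)
    (hgW : ∀ u ∈ W, g • u ∈ W) (hgv : g • v = v) :
    ∀ u ∈ W ⊓ (B v).ker, g • u ∈ W ⊓ (B v).ker := by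
  refine fun u ⟨hu, hvu⟩ ↦ ⟨hgW u hu, ?_⟩
  change B v (g • u) = 0
  nth_rw 1 [← hgv, hB]
  exact hvu

theorem relIndex_stabilizer_le_pow [Finite F] [Module.Finite F V]
    (hB : ∀ (g : G) x y, B (g • x) (g • y) = B x y)
    (hHW : ∀ h ∈ H, ∀ u ∈ W, h • u ∈ W) (hw : w ∈ W) (hvw : B v w ≠ 0)
    (hHv : ∀ h ∈ H, h • v = v) :
    (MulAction.stabilizer G w).relIndex H ≤ Nat.card F ^ (finrank F W - 1) := by
  have : Finite V := Module.finite_of_finite F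
  calc (MulAction.stabilizer G w).relIndex H
      ≤ Nat.card (W ⊓ (B v).ker : Submodule F V) := by
        refine relIndex_stabilizer_le_card (U := (W ⊓ (B v).ker).toAddSubgroup)
          fun h hh ↦ ⟨W.sub_mem (hHW h hh w hw) hw, ?_⟩
        change B v (h • w - w) = 0
        nth_rw 1 [map_sub, ← hHv h hh, hB, sub_self]
    _ = Nat.card F ^ finrank F (W ⊓ (B v).ker : Submodule F V) := natCard_eq_pow_finrank
    _ ≤ Nat.card F ^ (finrank F W - 1) :=
        Nat.pow_le_pow_right Nat.card_pos (Nat.le_sub_one_of_lt (finrank_inf_ker_lt hw hvw))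

theorem relIndex_fixingSubgroup_le_mul [Finite G] [SMulCommClass G F V] (hB : B.IsAlt)
    (hv : v ∈ W) (hw : w ∈ W) (hvw : B v w = 1) (hHv : ∀ h ∈ H, h • v = v) :
    (fixingSubgroup G (W : Set V)).relIndex H ≤
      (fixingSubgroup G ((W ⊓ (B v).ker ⊓ (B w).ker : Submodule F V) : Set V)).relIndex
        (MulAction.stabilizer G w ⊓ H) * (MulAction.stabilizer G w).relIndex H := by
  rw [Subgroup.relIndex_inf_mul_relIndex, ← Subgroup.inf_relIndex_right (_ ⊓ _)]
  refine Subgroup.relIndex_le_of_le_left ?_ Subgroup.index_ne_zero_of_finite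
  rintro h ⟨⟨hfix, hhw⟩, hh⟩
  refine (mem_fixingSubgroup_iff G).2 fun u hu ↦ ?_
  have hu' := (mem_fixingSubgroup_iff G).1 hfix _ (sub_mem_inf_ker_inf_ker hB hv hw hvw hu)
  simpa [smul_sub, smul_comm h, hHv h hh, MulAction.mem_stabilizer_iff.1 hhw] using hu'

theorem sq_add_sub_one_mul_four_le_sq {a b : ℕ} (hab : a + 2 ≤ b) :
    a ^ 2 + (b - 1) * 4 ≤ b ^ 2 := by
  obtain ⟨k, rfl⟩ := Nat.exists_eq_add_of_le hab
  rw [show a + 2 + k - 1 = a + k + 1 by omega]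
  nlinarith

variable [Finite F] [Module.Finite F V] [Finite G] [SMulCommClass G F V]
  {p : ℕ} [Fact p.Prime] [CharP F p]

theorem relIndex_fixingSubgroup_pow_four_le (hB : B.IsAlt)
    (hGB : ∀ (g : G) x y, B (g • x) (g • y) = B x y) (hH : IsPGroup p H)
    (hW : Disjoint W (B.orthogonal W)) (hHW : ∀ h ∈ H, ∀ u ∈ W, h • u ∈ W) :
    (fixingSubgroup G (W : Set V)).relIndex H ^ 4 ≤ Nat.card F ^ finrank F W ^ 2 := by
  induction hd : finrank F W using Nat.strong_induction_on generalizing W H with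
  | _ d ih =>
  subst hd
  rcases eq_or_ne W ⊥ with rfl | hW0
  · have : fixingSubgroup G ((⊥ : Submodule F V) : Set V) = ⊤ := by
      ext g
      simp [mem_fixingSubgroup_iff]
    rw [this, Subgroup.relIndex_top_left, one_pow]
    exact Nat.pow_pos Nat.card_pos
  obtain ⟨v, hv, hv0, hHv⟩ := exists_ne_zero_forall_smul_eq_of_isPGroup hH hW0 hHW
  obtain ⟨w, hw, hvw⟩ := exists_apply_eq_one_of_disjoint_orthogonal hB.isRefl hW hv hv0
  have hvw0 : B v w ≠ 0 := hvw ▸ one_ne_zero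
  have hdim := finrank_inf_ker_inf_ker_add_two_le hB hv hw hvw0
  set W' := W ⊓ (B v).ker ⊓ (B w).ker
  set S := MulAction.stabilizer G w
  have hSW' : ∀ h ∈ S ⊓ H, ∀ u ∈ W', h • u ∈ W' := fun h hh ↦
    smul_mem_inf_ker (hGB h) (smul_mem_inf_ker (hGB h) (hHW h hh.2) (hHv h hh.2)) hh.1
  have hfixW' : (fixingSubgroup G (W' : Set V)).relIndex (S ⊓ H) ^ 4 ≤
      Nat.card F ^ finrank F W' ^ 2 :=
    ih _ (by omega) (hH.to_le inf_le_right)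
      (disjoint_orthogonal_inf_ker_inf_ker hB hW hv hw hvw) hSW' rfl
  have hS : S.relIndex H ≤ Nat.card F ^ (finrank F W - 1) :=
    relIndex_stabilizer_le_pow hGB hHW hw hvw0 hHv
  calc (fixingSubgroup G (W : Set V)).relIndex H ^ 4
      ≤ ((fixingSubgroup G (W' : Set V)).relIndex (S ⊓ H) * S.relIndex H) ^ 4 :=
        Nat.pow_le_pow_left (relIndex_fixingSubgroup_le_mul hB hv hw hvw hHv) 4
    _ ≤ Nat.card F ^ finrank F W' ^ 2 * (Nat.card F ^ (finrank F W - 1)) ^ 4 := by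
        rw [mul_pow]
        exact Nat.mul_le_mul hfixW' (Nat.pow_le_pow_left hS 4)
    _ ≤ Nat.card F ^ finrank F W ^ 2 := by
        rw [← pow_mul, ← pow_add]
        exact Nat.pow_le_pow_right Nat.card_pos (sq_add_sub_one_mul_four_le_sq hdim)

theorem card_pow_four_le_of_isPGroup [FaithfulSMul G V] (hB : B.IsAlt) (hBnd : B.Nondegenerate)
    (hGB : ∀ (g : G) x y, B (g • x) (g • y) = B x y) (hH : IsPGroup p H)
    (hW : Disjoint W (B.orthogonal W)) (hHW : ∀ h ∈ H, ∀ u ∈ W, h • u ∈ W) :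
    Nat.card H ^ 4 ≤ Nat.card F ^ (finrank F W ^ 2 + (finrank F V - finrank F W) ^ 2) := by
  set fixW := fixingSubgroup G (W : Set V)
  set fixW' := fixingSubgroup G (B.orthogonal W : Set V)
  have hcompl : IsCompl W (B.orthogonal W) :=
    (LinearMap.BilinForm.isCompl_orthogonal_iff_disjoint hB.isRefl).2 hW
  have hbot : fixW' ⊓ fixW = ⊥ := by
    refine (Subgroup.eq_bot_iff_forall _).2 fun g ⟨hg', hg⟩ ↦
      FaithfulSMul.eq_of_smul_eq_smul (α := V) fun x ↦ ?_
    obtain ⟨y, hy, z, hz, rfl⟩ :=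
      Submodule.mem_sup.1 (hcompl.sup_eq_top ▸ Submodule.mem_top : x ∈ _)
    rw [smul_add, one_smul, (mem_fixingSubgroup_iff G).1 hg y hy,
      (mem_fixingSubgroup_iff G).1 hg' z hz]
  have hfix : fixW.relIndex H ^ 4 ≤ Nat.card F ^ finrank F W ^ 2 :=
    relIndex_fixingSubgroup_pow_four_le hB hGB hH hW hHW
  have hfix' : fixW'.relIndex (fixW ⊓ H) ^ 4 ≤ Nat.card F ^ (finrank F V - finrank F W) ^ 2 := by
    rw [← LinearMap.BilinForm.finrank_orthogonal hBnd]
    refine relIndex_fixingSubgroup_pow_four_le hB hGB (hH.to_le inf_le_right) ?_ fun h hh ↦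
      smul_mem_orthogonal (hGB h) (hHW _ (H.inv_mem hh.2))
    rw [LinearMap.BilinForm.orthogonal_orthogonal hBnd hB.isRefl]
    exact hW.symm
  calc Nat.card H ^ 4 = (fixW.relIndex H * fixW'.relIndex (fixW ⊓ H)) ^ 4 := by
        rw [mul_comm, Subgroup.relIndex_inf_mul_relIndex, hbot, Subgroup.relIndex_bot_left]
    _ ≤ _ := by
        rw [mul_pow, pow_add]
        gcongr

end PGroup

section Isometry

variable {K V : Type*} [Field K] [AddCommGroup V] [Module K V] {B : LinearMap.BilinForm K V}
  {f : End K V} {e x : K}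

theorem isSemisimple_of_pow_eq_one {N : ℕ} (hN : (N : K) ≠ 0) (hf : f ^ N = 1) :
    f.IsSemisimple :=
  End.isSemisimple_of_squarefree_aeval_eq_zero
    (Polynomial.X_pow_sub_one_separable_iff.2 hN).squarefree (by simp [hf])

theorem disjoint_eigenspace_range_sub_of_isSemisimple (hf : f.IsSemisimple) (e : K) :
    Disjoint (f.eigenspace e) (f - e • 1).range := by
  refine Submodule.disjoint_def.2 ?_
  rintro _ hw ⟨u, rfl⟩
  have hu : u ∈ f.genEigenspace e (2 : ℕ) := by
    rw [End.mem_genEigenspace_nat, pow_two]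
    rwa [End.eigenspace_def] at hw
  rw [hf.isFinitelySemisimple.genEigenspace_eq_eigenspace e (by norm_num)] at hu
  simpa [End.eigenspace_def] using hu

theorem eigenspace_le_orthogonal_eigenspace (hBf : ∀ u v, B (f u) (f v) = B u v)
    (hx : x * x ≠ 1) : f.eigenspace x ≤ B.orthogonal (f.eigenspace x) := by
  intro v hv u hu
  have huv : (x * x) * B u v = B u v := by
    have := hBf u v
    rw [End.mem_eigenspace_iff.1 hu, End.mem_eigenspace_iff.1 hv] at this
    simpa [mul_assoc] using this
  exact (mul_left_eq_self₀.1 huv).resolve_left hx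

variable [Module.Finite K V]

theorem mul_self_eq_one_of_finrank_lt_two_mul (hB : B.Nondegenerate)
    (hBf : ∀ u v, B (f u) (f v) = B u v) (hx : finrank K V < 2 * finrank K (f.eigenspace x)) :
    x * x = 1 := by
  by_contra hxx
  have := Submodule.finrank_mono (eigenspace_le_orthogonal_eigenspace hBf hxx)
  rw [LinearMap.BilinForm.finrank_orthogonal hB] at this
  omega

theorem orthogonal_eigenspace_eq_range (hB : B.Nondegenerate)
    (hBf : ∀ u v, B (f u) (f v) = B u v) (he : e * e = 1) :
    B.orthogonal (f.eigenspace e) = (f - e • 1).range := by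
  refine (Submodule.eq_of_le_of_finrank_eq ?_ ?_).symm
  · rintro _ ⟨u, rfl⟩ w hw
    have hw' : w = e • f w := by
      rw [End.mem_eigenspace_iff.1 hw, smul_smul, he, one_smul]
    have : B w (f u) = e * B w u := by
      nth_rw 1 [hw', map_smul, LinearMap.smul_apply, hBf, smul_eq_mul]
    change B w _ = 0
    simp [this]
  · rw [LinearMap.BilinForm.finrank_orthogonal hB, End.eigenspace_def,
      ← LinearMap.finrank_range_add_finrank_ker (f - e • (1 : End K V)), Nat.add_sub_cancel]

theorem disjoint_eigenspace_orthogonal (hB : B.Nondegenerate)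
    (hBf : ∀ u v, B (f u) (f v) = B u v) (hf : f.IsSemisimple) (he : e * e = 1) :
    Disjoint (f.eigenspace e) (B.orthogonal (f.eigenspace e)) :=
  orthogonal_eigenspace_eq_range hB hBf he ▸ disjoint_eigenspace_range_sub_of_isSemisimple hf e

end Isometry

section Support

open Matrix

variable {F K ι : Type*} [Field F] [Field K] [Fintype ι]

theorem rank_fromBlocks_one_zero {m n : Type*} [Fintype m] [Fintype n] [DecidableEq m] :
    (fromBlocks 1 0 0 0 : Matrix (m ⊕ n) (m ⊕ n) F).rank = Fintype.card m := by
  classical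
  rw [← diagonal_one, ← diagonal_zero, fromBlocks_diagonal, rank_diagonal]
  simp [Fintype.card_subtype, Fintype.sum_sum_type, Finset.card_filter]

theorem rank_map_ringHom (φ : F →+* K) (A : Matrix ι ι F) : (A.map φ).rank = A.rank := by
  classical
  obtain ⟨P, Q, e, hP, hQ, h⟩ := A.exists_rank_normal_form
  have hPK : IsUnit (P.map φ) := hP.map φ.mapMatrix
  have hQK : IsUnit (Q.map φ) := hQ.map φ.mapMatrix
  have hrank : (P.map φ * A.map φ * Q.map φ).rank = A.rank := by
    rw [← Matrix.map_mul, ← Matrix.map_mul, h, ← submatrix_map, fromBlocks_map, rank_submatrix,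
      Matrix.map_one _ φ.map_zero φ.map_one, Matrix.map_zero _ φ.map_zero,
      Matrix.map_zero _ φ.map_zero, Matrix.map_zero _ φ.map_zero, rank_fromBlocks_one_zero,
      Fintype.card_fin]
  rwa [rank_mul_eq_left_of_isUnit_det _ _ ((isUnit_iff_isUnit_det _).1 hQK),
    rank_mul_eq_right_of_isUnit_det _ _ ((isUnit_iff_isUnit_det _).1 hPK)] at hrank

variable [DecidableEq ι]

theorem rank_sub_smul_one_add_finrank_eigenspace (A : Matrix ι ι F) (a : F) :
    (A - a • (1 : Matrix ι ι F)).rank + finrank F (End.eigenspace (toLin' A) a) =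
      Fintype.card ι := by
  have : toLin' A - a • 1 = toLin' (A - a • 1) := by simp [End.one_eq_id]
  rw [End.eigenspace_def, this, rank_eq_finrank_range_toLin _ (Pi.basisFun F ι) (Pi.basisFun F ι),
    toLin_eq_toLin', LinearMap.finrank_range_add_finrank_ker, finrank_fintype_fun_eq_card]

theorem finrank_eigenspace_map (φ : F →+* K) (A : Matrix ι ι F) (a : F) :
    finrank K (End.eigenspace (toLin' (A.map φ)) (φ a)) =
      finrank F (End.eigenspace (toLin' A) a) := by
  have hmap : A.map φ - φ a • (1 : Matrix ι ι K) = (A - a • (1 : Matrix ι ι F)).map φ := by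
    ext i j
    simp [Matrix.one_apply, apply_ite φ]
  have hK := rank_sub_smul_one_add_finrank_eigenspace (A.map φ) (φ a)
  have hF := rank_sub_smul_one_add_finrank_eigenspace A a
  rw [hmap, rank_map_ringHom] at hK
  omega

theorem matSupp_eq_card_sub_iSup_finrank_eigenspace (A : Matrix ι ι F) :
    matSupp A = Fintype.card ι - ⨆ x : (AlgebraicClosure F)ˣ, finrank (AlgebraicClosure F)
      (End.eigenspace (toLin' (A.map (algebraMap F (AlgebraicClosure F)))) x.val) := by
  refine congrArg (Fintype.card ι - ·) (iSup_congr fun x ↦ ?_)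
  rw [End.eigenspace_def, toLin'_apply', End.one_eq_id]

theorem exists_finrank_eigenspace_add_matSupp (A : Matrix ι ι F) :
    ∃ x : AlgebraicClosure F, finrank (AlgebraicClosure F)
      (End.eigenspace (toLin' (A.map (algebraMap F (AlgebraicClosure F)))) x) + matSupp A =
        Fintype.card ι := by
  rw [matSupp_eq_card_sub_iSup_finrank_eigenspace]
  set D := fun x : (AlgebraicClosure F)ˣ ↦ finrank (AlgebraicClosure F)
    (End.eigenspace (toLin' (A.map (algebraMap F (AlgebraicClosure F)))) x.val)
  have hD (x) : D x ≤ Fintype.card ι :=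
    (Submodule.finrank_le _).trans_eq (finrank_fintype_fun_eq_card _)
  obtain ⟨x, hx⟩ : ∃ x, D x = ⨆ x, D x :=
    Nat.sSup_mem (Set.range_nonempty D) ⟨_, Set.forall_mem_range.2 hD⟩
  exact ⟨x, hx ▸ Nat.add_sub_of_le (hD x)⟩

theorem isSemisimple_toLin'_of_coprime_orderOf {p : ℕ} [Fact p.Prime] [CharP F p]
    {A : Matrix ι ι F} (hA : (orderOf A).Coprime p) :
    End.IsSemisimple (toLin' A) := by
  have hN : (orderOf A : F) ≠ 0 := by
    rw [Ne, CharP.cast_eq_zero_iff F p, ← Nat.Prime.coprime_iff_not_dvd Fact.out]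
    exact hA.symm
  refine isSemisimple_of_pow_eq_one hN ?_
  rw [← toLin'_pow, pow_orderOf_eq_one, toLin'_one, End.one_eq_id]

end Support

section Symplectic

open Matrix

variable {l F : Type*} [Fintype l] [DecidableEq l] [Field F]

variable (l F) in
/-- The standard symplectic form on column vectors, with Gram matrix `Matrix.J l F`. -/
noncomputable def symplecticForm : LinearMap.BilinForm F (l ⊕ l → F) := toBilin' (J l F)

theorem symplecticForm_isAlt : (symplecticForm l F).IsAlt := by
  intro v
  simp [symplecticForm, J, toBilin'_apply', fromBlocks_mulVec, dotProduct, Fintype.sum_sum_type,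
    neg_mulVec, mul_comm]

theorem symplecticForm_nondegenerate : (symplecticForm l F).Nondegenerate :=
  LinearMap.BilinForm.nondegenerate_toBilin'_of_det_ne_zero' _ (isUnit_det_J l F).ne_zero

theorem symplecticForm_mulVec_mulVec {A : Matrix (l ⊕ l) (l ⊕ l) F} (hA : A ∈ symplecticGroup l F)
    (u v : l ⊕ l → F) : symplecticForm l F (A *ᵥ u) (A *ᵥ v) = symplecticForm l F u v := by
  have := toBilin'_comp (J l F) A A
  rw [SymplecticGroup.mem_iff'.1 hA] at this
  exact DFunLike.congr_fun (DFunLike.congr_fun this u) v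

theorem exists_mul_self_eq_one_of_card_lt_finrank_eigenspace {K : Type*} [Field K] (φ : F →+* K)
    {A : Matrix (l ⊕ l) (l ⊕ l) F} (hA : A ∈ symplecticGroup l F) {x : K}
    (hx : Fintype.card l < finrank K (End.eigenspace (toLin' (A.map φ)) x)) :
    ∃ e : F, e * e = 1 ∧ φ e = x := by
  have hxx : x * x = 1 := by
    refine mul_self_eq_one_of_finrank_lt_two_mul (f := toLin' (A.map φ))
      (symplecticForm_nondegenerate (l := l)) (fun u v ↦ ?_) ?_
    · simpa only [toLin'_apply] using
        symplecticForm_mulVec_mulVec (SymplecticGroup.map_mem hA φ) u v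
    · rw [finrank_fintype_fun_eq_card, Fintype.card_sum]
      omega
  rcases mul_self_eq_one_iff.1 hxx with rfl | rfl
  · exact ⟨1, by simp⟩
  · exact ⟨-1, by simp⟩

theorem exists_finrank_eigenspace_add_matSupp_of_mem_symplecticGroup
    {A : Matrix (l ⊕ l) (l ⊕ l) F} (hA : A ∈ symplecticGroup l F)
    (hs : matSupp A < Fintype.card l) :
    ∃ e : F, e * e = 1 ∧
      finrank F (End.eigenspace (toLin' A) e) + matSupp A = 2 * Fintype.card l := by
  obtain ⟨x, hx⟩ := exists_finrank_eigenspace_add_matSupp A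
  rw [Fintype.card_sum, ← two_mul] at hx
  obtain ⟨e, he, rfl⟩ := exists_mul_self_eq_one_of_card_lt_finrank_eigenspace
    (algebraMap F (AlgebraicClosure F)) hA (x := x) (by omega)
  exact ⟨e, he, by rwa [finrank_eigenspace_map] at hx⟩

end Symplectic

theorem natCast_le_rpow_div_of_pow_le {a q k n : ℕ} (hn : n ≠ 0) (h : a ^ n ≤ q ^ k) :
    (a : ℝ) ≤ (q : ℝ) ^ ((k : ℝ) / n) := by
  rw [← pow_le_pow_iff_left₀ a.cast_nonneg (Real.rpow_nonneg q.cast_nonneg _) hn,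
    ← Real.rpow_mul_natCast q.cast_nonneg, div_mul_cancel₀ _ (Nat.cast_ne_zero.2 hn),
    Real.rpow_natCast]
  exact_mod_cast h

section Centralizer

open Matrix

variable {l F : Type*} [Fintype l] [DecidableEq l] [Field F] {p : ℕ} [Fact p.Prime] [CharP F p]

theorem card_pow_four_le_of_isPGroup_of_le_centralizer [Finite F] {g : symplecticGroup l F}
    (hg : (orderOf g).Coprime p) (hs : matSupp (g : Matrix (l ⊕ l) (l ⊕ l) F) < Fintype.card l)
    {H : Subgroup (symplecticGroup l F)} (hH : IsPGroup p H)
    (hHg : H ≤ Subgroup.centralizer {g}) :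
    Nat.card H ^ 4 ≤ Nat.card F ^ ((2 * Fintype.card l - matSupp g.1) ^ 2 + matSupp g.1 ^ 2) := by
  obtain ⟨e, he, hdim⟩ := exists_finrank_eigenspace_add_matSupp_of_mem_symplecticGroup g.2 hs
  have hinv (h : symplecticGroup l F) (u v : l ⊕ l → F) :
      symplecticForm l F (h • u) (h • v) = symplecticForm l F u v :=
    symplecticForm_mulVec_mulVec h.2 u v
  have hW : ∀ h ∈ H, ∀ u ∈ End.eigenspace (toLin' g.1) e,
      h • u ∈ End.eigenspace (toLin' g.1) e := by
    intro h hh u hu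
    rw [End.mem_eigenspace_iff] at hu ⊢
    have hgu : g • u = e • u := hu
    have hgh : g * h = h * g := (Subgroup.mem_centralizer_singleton_iff.1 (hHg hh)).symm
    calc g • h • u = h • g • u := by rw [← mul_smul, hgh, mul_smul]
      _ = e • h • u := by rw [hgu, smul_comm]
  have hdisj := disjoint_eigenspace_orthogonal symplecticForm_nondegenerate (hinv g)
    (isSemisimple_toLin'_of_coprime_orderOf ((orderOf_submonoid g).symm ▸ hg)) he
  have hV : finrank F (l ⊕ l → F) = 2 * Fintype.card l := by
    rw [finrank_fintype_fun_eq_card, Fintype.card_sum, two_mul]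
  have : Finite (Matrix (l ⊕ l) (l ⊕ l) F) := inferInstanceAs (Finite (l ⊕ l → l ⊕ l → F))
  have : FaithfulSMul (Matrix (l ⊕ l) (l ⊕ l) F) (l ⊕ l → F) := ⟨ext_iff_smul.2⟩
  have hle := card_pow_four_le_of_isPGroup symplecticForm_isAlt symplecticForm_nondegenerate hinv
    hH hdisj hW
  rwa [hV, ← hdim, Nat.add_sub_cancel_left, Nat.eq_sub_of_add_eq hdim] at hle

theorem centralizer_p_part_bound_small_support_general [Finite F] (g : symplecticGroup l F)
    (hg : (orderOf g).Coprime p)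
    (hs : matSupp (g : Matrix (l ⊕ l) (l ⊕ l) F) < Fintype.card l) :
    (p : ℝ) ^ (Nat.card (Subgroup.centralizer {g})).factorization p ≤
      (Nat.card F : ℝ) ^
        (((2 * Fintype.card l - matSupp g.1 : ℝ) ^ 2 + (matSupp g.1 : ℝ) ^ 2) / 4) := by
  obtain ⟨P⟩ : Nonempty (Sylow p (Subgroup.centralizer {g})) := inferInstance
  have hcard : Nat.card (P.map (Subgroup.centralizer {g}).subtype) =
      p ^ (Nat.card (Subgroup.centralizer {g})).factorization p := by
    rw [Subgroup.card_map_of_injective (Subgroup.subtype_injective _), P.card_eq_multiplicity]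
  have hH := card_pow_four_le_of_isPGroup_of_le_centralizer hg hs (P.isPGroup'.map _)
    (Subgroup.map_subtype_le _)
  rw [hcard] at hH
  have hs' : matSupp g.1 ≤ 2 * Fintype.card l := by omega
  simpa [Nat.cast_sub hs'] using natCast_le_rpow_div_of_pow_le four_ne_zero hH

end Centralizer

/-- **Lemma 3.1(i) of Liebeck–Shalev–Tiep (symplectic case).** Let `q = p^f`, `n = 2m`
even, `G = Sp_n(q)`, and `g ∈ G` semisimple (of order prime to `p`) with support
`s = supp(g)` satisfying `1 ≤ s < n/2`. Then `|C_G(g)|_p ≤ q^{((n−s)² + s²)/4}`. -/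
theorem centralizer_p_part_bound_small_support (F : Type) [Field F] [Fintype F]
    (p f : ℕ) (hp : p.Prime) (hf : 0 < f) (hcard : Fintype.card F = p ^ f)
    (m : ℕ) (g : Matrix.symplecticGroup (Fin m) F)
    (hss : Nat.Coprime (orderOf g) p)
    (s : ℕ) (hs : s = matSupp (g : Matrix (Fin m ⊕ Fin m) (Fin m ⊕ Fin m) F))
    (h1 : 1 ≤ s) (h2 : s < m) :
    ((p : ℝ) ^ ((Nat.card
        (Subgroup.centralizer {g} : Subgroup (Matrix.symplecticGroup (Fin m) F))).factorization p))
      ≤ (Fintype.card F : ℝ) ^ ((((2 * m : ℝ) - s) ^ 2 + (s : ℝ) ^ 2) / 4) := by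
  have := Fact.mk hp
  have := charP_of_card_eq_prime_pow hcard
  simpa [← hs] using centralizer_p_part_bound_small_support_general g hss (by simpa [← hs])

end McKayGraphs
end

section
/- Let G be a finite group, let τ be a character of G such that every irreducible character of G is a constituent of τ, and let δ be any nonzero character of G. Then every irreducible character of G is a constituent of the product τ·δ. -/
open scoped BigOperators

namespace McKayGraphs

/-- The standard inner product of class functions on a finite group `G`:
`⟨φ,ψ⟩ = |G|⁻¹ Σ_{g∈G} φ(g)·conj(ψ(g))`. -/
noncomputable def charInner {G : Type*} [Group G] (φ ψ : G → ℂ) : ℂ :=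
  (Nat.card G : ℂ)⁻¹ * ∑ᶠ g, φ g * (starRingEnd ℂ) (ψ g)

/-- `χ : G → ℂ` is a character if it is the trace function of a finite-dimensional
complex representation of `G`. -/
def IsChar {G : Type*} [Group G] (χ : G → ℂ) : Prop :=
  ∃ (d : ℕ) (ρ : G →* Matrix.GeneralLinearGroup (Fin d) ℂ),
    ∀ g, χ g = Matrix.trace (ρ g : Matrix (Fin d) (Fin d) ℂ)

/-- An irreducible character of `G`: a character with `⟨χ,χ⟩ = 1`. -/
def IsIrrChar {G : Type*} [Group G] (χ : G → ℂ) : Prop :=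
  IsChar χ ∧ charInner χ χ = 1

/-- `ψ` is a constituent of `φ` if `⟨φ,ψ⟩ ≠ 0`. -/
def IsConstituent {G : Type*} [Group G] (ψ φ : G → ℂ) : Prop :=
  charInner φ ψ ≠ 0

/-!
By conjugate symmetry `⟨τδ, ψ⟩ = ⟨τ, δ̄ψ⟩`, and `δ̄ψ` is again a nonzero character, so it suffices
that `τ` has nonzero inner product with every nonzero character `χ`. Inner products of characters
are dimensions of spaces of intertwining maps, so this holds because a representation affording `χ`
contains an irreducible one, which by assumption receives a nonzero map from one affording `τ`.
-/

open scoped ComplexOrder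
open Matrix Representation

/-- The representation `ρ` written in matrices with respect to the basis `b`, as needed to
compare `Representation.character` with the matrix traces in `IsChar`. -/
noncomputable def matrixHom {G k V ι : Type*} [Monoid G] [CommSemiring k] [AddCommMonoid V]
    [Module k V] [Fintype ι] [DecidableEq ι] (b : Module.Basis ι k V) (ρ : Representation k G V) :
    G →* Matrix ι ι k :=
  (LinearMap.toMatrixAlgEquiv b : (V →ₗ[k] V) →* Matrix ι ι k).comp ρ

theorem trace_matrixHom {G k V ι : Type*} [Monoid G] [Field k] [AddCommGroup V] [Module k V]
    [Fintype ι] [DecidableEq ι] (b : Module.Basis ι k V) (ρ : Representation k G V) (g : G) :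
    (matrixHom b ρ g).trace = ρ.character g :=
  (LinearMap.trace_eq_matrix_trace k b (ρ g)).symm

section Trace

variable {G 𝕜 : Type*} [Group G] [Finite G] [RCLike 𝕜]

-- Weyl's unitary trick: average the standard Hermitian form over the group.
theorem exists_posDef_conjTranspose_mul_mul_eq {n : Type*} [Fintype n] [DecidableEq n]
    (M : G →* Matrix n n 𝕜) : ∃ H : Matrix n n 𝕜, H.PosDef ∧ ∀ g, (M g)ᴴ * H * M g = H := by
  have := Fintype.ofFinite G
  refine ⟨∑ x, (M x)ᴴ * M x, ?_, fun g ↦ ?_⟩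
  · exact posDef_sum Finset.univ_nonempty fun x _ ↦
      .conjTranspose_mul_self _ (mulVec_injective_of_isUnit ((Group.isUnit x).map M))
  · simp only [Finset.mul_sum, Finset.sum_mul]
    refine Fintype.sum_equiv (Equiv.mulRight g) _ _ fun x ↦ ?_
    simp only [Equiv.coe_mulRight, map_mul, conjTranspose_mul, Matrix.mul_assoc]

theorem trace_map_inv {n : Type*} [Fintype n] [DecidableEq n] (M : G →* Matrix n n 𝕜) (g : G) :
    (M g⁻¹).trace = star (M g).trace := by
  obtain ⟨H, hH, hinv⟩ := exists_posDef_conjTranspose_mul_mul_eq M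
  have hdet : IsUnit H.det := (isUnit_iff_isUnit_det H).mp hH.isUnit
  have hMM : M g * M g⁻¹ = 1 := by rw [← map_mul, mul_inv_cancel, map_one]
  have hconj : M g⁻¹ = H⁻¹ * ((M g)ᴴ * H) := by
    calc M g⁻¹ = H⁻¹ * (H * M g⁻¹) := (nonsing_inv_mul_cancel_left _ _ hdet).symm
      _ = H⁻¹ * ((M g)ᴴ * H * (M g * M g⁻¹)) := by rw [← Matrix.mul_assoc _ (M g), hinv]
      _ = H⁻¹ * ((M g)ᴴ * H) := by rw [hMM, Matrix.mul_one]
  rw [hconj, trace_mul_comm, mul_nonsing_inv_cancel_right _ _ hdet, trace_conjTranspose]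

theorem character_inv {V : Type*} [AddCommGroup V] [Module 𝕜 V] [FiniteDimensional 𝕜 V]
    (ρ : Representation 𝕜 G V) (g : G) : ρ.character g⁻¹ = star (ρ.character g) := by
  simp only [← trace_matrixHom (Module.finBasis 𝕜 V), trace_map_inv]

end Trace

section Irreducible

/-- The subrepresentations of a subrepresentation `S` of `ρ` are the subrepresentations of `ρ`
contained in `S`; hence `S` is irreducible exactly when it is an atom. -/
def subrepresentationIicOrderIso {G k V : Type*} [Monoid G] [Semiring k] [AddCommMonoid V]
    [Module k V] {ρ : Representation k G V} (S : Subrepresentation ρ) :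
    Subrepresentation S.toRepresentation ≃o Set.Iic S where
  toFun U :=
    ⟨⟨U.toSubmodule.map S.toSubmodule.subtype, by
      rintro g _ ⟨v, hv, rfl⟩
      exact ⟨S.toRepresentation g v, U.apply_mem_toSubmodule g hv, rfl⟩⟩,
      Submodule.map_subtype_le _ _⟩
  invFun U :=
    ⟨U.1.toSubmodule.comap S.toSubmodule.subtype, fun g _ hv ↦ U.1.apply_mem_toSubmodule g hv⟩
  left_inv U := Subrepresentation.toSubmodule_injective <|
    Submodule.comap_map_eq_of_injective S.toSubmodule.injective_subtype _
  right_inv U := Subtype.ext <| Subrepresentation.toSubmodule_injective <|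
    (Submodule.map_comap_subtype _ _).trans (inf_eq_right.mpr U.2)
  map_rel_iff' := Submodule.map_le_map_iff_of_injective S.toSubmodule.injective_subtype _ _

variable {G k V : Type*} [Monoid G] [Field k] [AddCommGroup V] [Module k V]

theorem isIrreducible_toRepresentation_iff_isAtom {ρ : Representation k G V}
    {S : Subrepresentation ρ} :
    IsIrreducible S.toRepresentation ↔ IsAtom S :=
  (subrepresentationIicOrderIso S).isSimpleOrder_iff.trans Set.isSimpleOrder_Iic_iff_isAtom

theorem exists_isIrreducible_toRepresentation [FiniteDimensional k V] [Nontrivial V]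
    (ρ : Representation k G V) : ∃ S : Subrepresentation ρ, IsIrreducible S.toRepresentation := by
  have : WellFoundedLT (Subrepresentation ρ) :=
    StrictMono.wellFoundedLT (f := Subrepresentation.toSubmodule) fun _ _ h ↦ h
  have : IsAtomic (Subrepresentation ρ) := isAtomic_of_orderBot_wellFounded_lt wellFounded_lt
  have : Nontrivial (Subrepresentation ρ) :=
    ⟨⊥, ⊤, fun h ↦ bot_ne_top (α := Submodule k V) (congrArg Subrepresentation.toSubmodule h)⟩
  obtain ⟨S, hS⟩ := IsAtomic.exists_atom (Subrepresentation ρ)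
  exact ⟨S, isIrreducible_toRepresentation_iff_isAtom.mpr hS⟩

end Irreducible

section Character

variable {G : Type*} [Group G]

theorem isChar_character {V : Type*} [AddCommGroup V] [Module ℂ V] [FiniteDimensional ℂ V]
    (ρ : Representation ℂ G V) : IsChar ρ.character :=
  ⟨_, (matrixHom (Module.finBasis ℂ V) ρ).toHomUnits, fun g ↦ (trace_matrixHom _ ρ g).symm⟩

namespace IsChar

variable {χ ψ : G → ℂ}

theorem exists_representation (hχ : IsChar χ) :
    ∃ (d : ℕ) (ρ : Representation ℂ G (Fin d → ℂ)), ρ.character = χ := by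
  obtain ⟨d, M, hM⟩ := hχ
  let toEnd := (toLinAlgEquiv' (R := ℂ) (n := Fin d)).toMulEquiv.toMonoidHom
  exact ⟨d, toEnd.comp ((Units.coeHom _).comp M),
    funext fun g ↦ (trace_toLin'_eq _).trans (hM g).symm⟩

protected theorem star (hχ : IsChar χ) : IsChar (star χ) := by
  obtain ⟨d, M, hM⟩ := hχ
  refine ⟨d, (GeneralLinearGroup.map (starRingEnd ℂ)).comp M, fun g ↦ ?_⟩
  rw [Pi.star_apply, hM]
  exact AddMonoidHom.map_trace (starRingEnd ℂ) _

protected theorem mul (hχ : IsChar χ) (hψ : IsChar ψ) : IsChar (χ * ψ) := by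
  obtain ⟨m, ρ, rfl⟩ := hχ.exists_representation
  obtain ⟨n, σ, rfl⟩ := hψ.exists_representation
  rw [← char_tensor]
  exact isChar_character _

theorem apply_one_ne_zero (hχ : IsChar χ) (h0 : χ ≠ 0) : χ 1 ≠ 0 := by
  obtain ⟨d, M, hM⟩ := hχ
  have hd : d ≠ 0 := by
    rintro rfl
    exact h0 (funext fun g ↦ (hM g).trans (trace_eq_zero_of_isEmpty _))
  simpa [hM] using hd

end IsChar

theorem star_charInner (φ ψ : G → ℂ) : star (charInner φ ψ) = charInner ψ φ := by
  have hsum : star (∑ᶠ g, φ g * star (ψ g)) = ∑ᶠ g, star (φ g * star (ψ g)) :=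
    starAddEquiv.map_finsum _
  simp only [charInner, starRingEnd_apply, star_mul', star_inv₀, star_natCast, hsum, star_star,
    mul_comm]

theorem charInner_mul_left (φ χ ψ : G → ℂ) :
    charInner (φ * χ) ψ = charInner φ (star χ * ψ) := by
  simp [charInner, mul_assoc]

theorem isConstituent_comm {φ ψ : G → ℂ} : IsConstituent ψ φ ↔ IsConstituent φ ψ := by
  rw [IsConstituent, IsConstituent, ← star_charInner, star_ne_zero]

theorem IsIrrChar.ne_zero {χ : G → ℂ} (hχ : IsIrrChar χ) : χ ≠ 0 := by
  rintro rfl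
  simpa [charInner] using hχ.2

variable [Finite G] {V W : Type*} [AddCommGroup V] [Module ℂ V] [FiniteDimensional ℂ V]
  [AddCommGroup W] [Module ℂ W] [FiniteDimensional ℂ W]

theorem charInner_character (σ : Representation ℂ G W) (ρ : Representation ℂ G V) :
    charInner σ.character ρ.character = Module.finrank ℂ (IntertwiningMap ρ σ) := by
  have := Fintype.ofFinite G
  have : Invertible (Nat.card G : ℂ) := invertibleOfNonzero (by simp)
  rw [← card_inv_mul_sum_char_mul_char_eq_finrank, charInner, finsum_eq_sum_of_fintype]
  simp only [character_inv, starRingEnd_apply]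

theorem isConstituent_character_iff {ρ : Representation ℂ G V} {σ : Representation ℂ G W} :
    IsConstituent ρ.character σ.character ↔ Nontrivial (IntertwiningMap ρ σ) := by
  rw [IsConstituent, charInner_character, Nat.cast_ne_zero, ← Nat.pos_iff_ne_zero,
    Module.finrank_pos_iff]

theorem isIrrChar_character (ρ : Representation ℂ G V) [IsIrreducible ρ] :
    IsIrrChar ρ.character :=
  ⟨isChar_character ρ, by
    rw [charInner_character, IsIrreducible.finrank_intertwiningMap_self, Nat.cast_one]⟩

theorem isConstituent_of_injective {U : Type*} [AddCommGroup U] [Module ℂ U]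
    [FiniteDimensional ℂ U] {ρ : Representation ℂ G V} {σ : Representation ℂ G W}
    {τ : Representation ℂ G U} (i : IntertwiningMap ρ σ) (hi : Function.Injective i)
    (h : IsConstituent ρ.character τ.character) : IsConstituent σ.character τ.character := by
  rw [isConstituent_comm, isConstituent_character_iff] at h ⊢
  have hcomp : Function.Injective fun f : IntertwiningMap τ ρ ↦ i.comp f := fun f f' hff' ↦
    DFunLike.ext _ _ fun x ↦ hi (DFunLike.congr_fun hff' x)
  exact hcomp.nontrivial

theorem IsChar.isConstituent_of_forall_isIrrChar {τ χ : G → ℂ} (hτ : IsChar τ)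
    (hall : ∀ ψ, IsIrrChar ψ → IsConstituent ψ τ) (hχ : IsChar χ) (hχ0 : χ ≠ 0) :
    IsConstituent χ τ := by
  obtain ⟨m, T, rfl⟩ := hτ.exists_representation
  obtain ⟨n, ρ, rfl⟩ := hχ.exists_representation
  have : Nontrivial (Fin n → ℂ) := by
    rw [← Module.finrank_pos_iff (R := ℂ), Nat.pos_iff_ne_zero, ← Nat.cast_ne_zero (R := ℂ),
      ← char_one ρ]
    exact hχ.apply_one_ne_zero hχ0
  obtain ⟨S, hS⟩ := exists_isIrreducible_toRepresentation ρ
  exact isConstituent_of_injective ⟨S.toSubmodule.subtype, fun _ ↦ rfl⟩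
    S.toSubmodule.injective_subtype (hall _ (isIrrChar_character S.toRepresentation))

end Character

theorem covers_irr_mul_general {G : Type*} [Group G] [Finite G] {τ δ : G → ℂ} (hτ : IsChar τ)
    (hδ : IsChar δ) (hδ0 : δ ≠ 0) (hall : ∀ ψ : G → ℂ, IsIrrChar ψ → IsConstituent ψ τ)
    {ψ : G → ℂ} (hψ : IsChar ψ) (hψ0 : ψ ≠ 0) : IsConstituent ψ (τ * δ) := by
  have hprod : star δ * ψ ≠ 0 := fun h ↦
    mul_ne_zero (star_ne_zero.mpr (hδ.apply_one_ne_zero hδ0)) (hψ.apply_one_ne_zero hψ0)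
      (congrFun h 1)
  rw [IsConstituent, charInner_mul_left]
  exact hτ.isConstituent_of_forall_isIrrChar hall (hδ.star.mul hψ) hprod

/-- **Absorption principle** (used in the proofs of Theorem 2 and Proposition 5.3 of
Liebeck–Shalev–Tiep). If every irreducible character of a finite group `G` is a
constituent of the character `τ`, and `δ` is any nonzero character of `G`, then
every irreducible character of `G` is a constituent of `τ·δ`. -/
theorem covers_irr_mul {G : Type*} [Group G] [Finite G]
    (τ δ : G → ℂ) (hτ : IsChar τ) (hδ : IsChar δ) (hδ0 : δ ≠ 0)
    (hall : ∀ ψ : G → ℂ, IsIrrChar ψ → IsConstituent ψ τ) :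
    ∀ ψ : G → ℂ, IsIrrChar ψ → IsConstituent ψ (τ * δ) :=
  fun _ hψ ↦ covers_irr_mul_general hτ hδ hδ0 hall hψ.1 hψ.ne_zero

end McKayGraphs
end
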